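/- Let n ≥ 2, let λ ∈ ℂ with λ ∉ ℝ_{≥0} (λ is not a nonnegative real number), and let N, P ≥ 0 be such that β_c := max{2 − 2P, (4 − 2N)/3} < 1. Then there exist constants C, c > 0, complex-valued potentials V : ℝⁿ → ℂ and W : ℝⁿ → ℂⁿ exactly one of which is identically zero, and a nonzero twice continuously differentiable function u : ℝⁿ → ℂ, such that −Δu + W·∇u + Vu = λu in ℝⁿ, |V(x)| ≤ C⟨x⟩^{−N} and |W(x)| ≤ C⟨x⟩^{−P} for all x ∈ ℝⁿ, and there exists A ∈ {−1, 0} such that |u(x)| ≤ C·exp(−c·|x|·(log|x|)^{A}) for all x with |x| ≥ 2. -/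

import Mathlib

noncomputable section

/-- Partial derivative of `u` in the `i`-th coordinate direction. -/
def pd {d : ℕ} (u : EuclideanSpace ℝ (Fin d) → ℂ) (i : Fin d)
    (x : EuclideanSpace ℝ (Fin d)) : ℂ :=
  fderiv ℝ u x (EuclideanSpace.single i 1)

/-- Laplacian on ℝᵈ: sum of second partial derivatives. -/
def lap {d : ℕ} (u : EuclideanSpace ℝ (Fin d) → ℂ) (x : EuclideanSpace ℝ (Fin d)) : ℂ :=
  ∑ i, pd (fun y => pd u i y) i x

/-!
Write `λ = -k²` with `Re k > 0`. On an `n`-dimensional space the decaying radial solutions of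
`Δu = k²u` have an asymptotic expansion `exp (-k r) r ^ (-(n - 1) / 2) (1 + a₁ / r + a₂ / r² + ⋯)`.
Truncate its logarithm and replace the radius `r` by `⟨x⟩ = √(1 + ‖x‖²)`: the result is a smooth
function `u` without zeros, so it solves `-Δu + V u = λ u` with `V = Δu / u - k²`. This `V` is a
polynomial in `1 / ⟨x⟩`, and each further term of the expansion raises its order of vanishing at
infinity; hence `V` decays faster than any prescribed power while `u` decays like `exp (-Re k ‖x‖)`.
-/

section Laplacian

open Module InnerProductSpace Laplacian
open scoped ContDiff

theorem lap_eq_laplacian {d : ℕ} {u : EuclideanSpace ℝ (Fin d) → ℂ} (hu : ContDiff ℝ 2 u) :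
    lap u = Δ u := by
  have hdiff : Differentiable ℝ (fderiv ℝ u) :=
    (hu.fderiv_right (m := 1) one_add_one_eq_two.le).differentiable one_ne_zero
  rw [laplacian_eq_iteratedFDeriv_orthonormalBasis u (EuclideanSpace.basisFun (Fin d) ℝ)]
  ext x
  simp [lap, pd, iteratedFDeriv_two_apply, fderiv_clm_apply (hdiff x)]

variable {E F : Type*} [NormedAddCommGroup E]

/-- The Japanese bracket `⟨x⟩`, a smooth substitute for the radial coordinate `‖x‖`. -/
def japaneseBracket (x : E) : ℝ := √(1 + ‖x‖ ^ 2)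

theorem japaneseBracket_sq (x : E) : japaneseBracket x ^ 2 = 1 + ‖x‖ ^ 2 :=
  Real.sq_sqrt (by positivity)

theorem one_le_japaneseBracket (x : E) : 1 ≤ japaneseBracket x :=
  Real.one_le_sqrt.2 (le_add_of_nonneg_right (by positivity))

theorem japaneseBracket_pos (x : E) : 0 < japaneseBracket x :=
  zero_lt_one.trans_le (one_le_japaneseBracket x)

theorem norm_le_japaneseBracket (x : E) : ‖x‖ ≤ japaneseBracket x :=
  Real.le_sqrt_of_sq_le (le_add_of_nonneg_left zero_le_one)

variable [InnerProductSpace ℝ E] [NormedAddCommGroup F] [NormedSpace ℝ F]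

theorem contDiff_japaneseBracket {n : ℕ∞ω} : ContDiff ℝ n (japaneseBracket (E := E)) :=
  (contDiff_const.add (contDiff_norm_sq ℝ)).sqrt fun x => by positivity

theorem hasFDerivAt_japaneseBracket (x : E) :
    HasFDerivAt japaneseBracket ((japaneseBracket x)⁻¹ • innerSL ℝ x) x := by
  have hsq : HasFDerivAt (fun y : E => 1 + ‖y‖ ^ 2) (2 • innerSL ℝ x) x :=
    (hasStrictFDerivAt_norm_sq x).hasFDerivAt.const_add 1
  refine (hsq.sqrt (by positivity)).congr_fderiv ?_
  rw [japaneseBracket, two_nsmul, ← two_smul ℝ, smul_smul]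
  congr 1
  field_simp

theorem hasFDerivAt_comp_japaneseBracket {f : ℝ → F} {f' : F} {x : E}
    (hf : HasDerivAt f f' (japaneseBracket x)) :
    HasFDerivAt (fun y => f (japaneseBracket y))
      ((innerSL ℝ x).smulRight ((japaneseBracket x)⁻¹ • f')) x := by
  refine (hf.hasFDerivAt.comp x (hasFDerivAt_japaneseBracket x)).congr_fderiv ?_
  ext y
  simp [smul_smul, mul_comm]

theorem fderiv_fderiv_comp_japaneseBracket {f f' f'' : ℝ → F}
    (hf : ∀ r > 0, HasDerivAt f (f' r) r) (hf' : ∀ r > 0, HasDerivAt f' (f'' r) r) (x v : E) :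
    fderiv ℝ (fderiv ℝ fun y => f (japaneseBracket y)) x v v =
      (inner ℝ x v ^ 2 * (japaneseBracket x)⁻¹ ^ 2) • f'' (japaneseBracket x) +
        (‖v‖ ^ 2 * (japaneseBracket x)⁻¹ - inner ℝ x v ^ 2 * (japaneseBracket x)⁻¹ ^ 3) •
          f' (japaneseBracket x) := by
  have hpos := japaneseBracket_pos x
  have hgrad : fderiv ℝ (fun y : E => f (japaneseBracket y)) = fun y =>
      ContinuousLinearMap.smulRightL ℝ E F (innerSL ℝ y)
        ((japaneseBracket y)⁻¹ • f' (japaneseBracket y)) :=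
    funext fun y => (hasFDerivAt_comp_japaneseBracket (hf _ (japaneseBracket_pos y))).fderiv
  have hradial : HasFDerivAt (fun y : E => (japaneseBracket y)⁻¹ • f' (japaneseBracket y)) _ x :=
    hasFDerivAt_comp_japaneseBracket ((hasDerivAt_inv hpos.ne').smul (hf' _ hpos))
  have hhess := ContinuousLinearMap.hasFDerivAt_of_bilinear
    (ContinuousLinearMap.smulRightL ℝ E F) (innerSL ℝ).hasFDerivAt hradial
  rw [hgrad, hhess.fderiv]
  simp only [ContinuousLinearMap.precompR_apply, ContinuousLinearMap.precompL_apply,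
    ContinuousLinearMap.compL_apply, ContinuousLinearMap.comp_apply, add_apply, smul_apply,
    ContinuousLinearMap.smulRight_apply, ContinuousLinearMap.smulRightL_apply_apply,
    innerSL_apply_apply ℝ, map_smul, real_inner_self_eq_norm_sq]
  module

theorem laplacian_comp_japaneseBracket [FiniteDimensional ℝ E] {f f' f'' : ℝ → F}
    (hf : ∀ r > 0, HasDerivAt f (f' r) r) (hf' : ∀ r > 0, HasDerivAt f' (f'' r) r) (x : E) :
    (Δ fun y : E => f (japaneseBracket y)) x =
      (1 - (japaneseBracket x)⁻¹ ^ 2) • f'' (japaneseBracket x) +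
        ((finrank ℝ E - 1) * (japaneseBracket x)⁻¹ + (japaneseBracket x)⁻¹ ^ 3) •
          f' (japaneseBracket x) := by
  have hpos := japaneseBracket_pos x
  have hnorm : ‖x‖ ^ 2 = japaneseBracket x ^ 2 - 1 := by rw [japaneseBracket_sq]; ring
  simp only [laplacian_eq_iteratedFDeriv_stdOrthonormalBasis, iteratedFDeriv_two_apply,
    Matrix.cons_val_zero, Matrix.cons_val_one, fderiv_fderiv_comp_japaneseBracket hf hf',
    OrthonormalBasis.norm_eq_one, Finset.sum_add_distrib, ← Finset.sum_smul, ← Finset.sum_mul,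
    Finset.sum_sub_distrib, OrthonormalBasis.sum_sq_inner_left, hnorm]
  congr 2
  · field_simp
  · simp only [one_pow, Finset.sum_const, Finset.card_univ, Fintype.card_fin, nsmul_eq_mul]
    field_simp
    ring

end Laplacian

section Polynomial

open Polynomial

theorem exists_norm_eval_le (p : ℂ[X]) : ∃ M : ℝ, ∀ z : ℂ, ‖z‖ ≤ 1 → ‖p.eval z‖ ≤ M := by
  simpa using (isCompact_closedBall (0 : ℂ) 1).exists_bound_of_continuousOn p.continuousOn

theorem exists_norm_eval_inv_le_of_X_pow_dvd {R : ℂ[X]} {m : ℕ} (hR : X ^ m ∣ R) {N : ℝ}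
    (hN : N ≤ m) : ∃ M : ℝ, ∀ r : ℝ, 1 ≤ r → ‖R.eval (r : ℂ)⁻¹‖ ≤ M * r ^ (-N) := by
  obtain ⟨S, rfl⟩ := hR
  obtain ⟨M, hM⟩ := exists_norm_eval_le S
  refine ⟨M, fun r hr => ?_⟩
  have hr0 : 0 < r := zero_lt_one.trans_le hr
  have hpow : ‖(r : ℂ)⁻¹ ^ m‖ ≤ r ^ (-N) := by
    rw [norm_pow, norm_inv, Complex.norm_of_nonneg hr0.le, ← Real.rpow_natCast,
      Real.inv_rpow hr0.le, ← Real.rpow_neg hr0.le]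
    exact Real.rpow_le_rpow_of_exponent_le hr (neg_le_neg hN)
  have hS : ‖S.eval (r : ℂ)⁻¹‖ ≤ M :=
    hM _ (by simpa using inv_le_one_of_one_le₀ (hr.trans (le_abs_self r)))
  rw [eval_mul, eval_pow, eval_X, norm_mul, mul_comm]
  exact mul_le_mul hS hpow (norm_nonneg _) ((norm_nonneg _).trans hS)

theorem hasDerivAt_eval_inv_ofReal (p : ℂ[X]) {r : ℝ} (hr : r ≠ 0) :
    HasDerivAt (fun s : ℝ => p.eval (s : ℂ)⁻¹)
      (-(r : ℂ)⁻¹ ^ 2 * p.derivative.eval (r : ℂ)⁻¹) r := by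
  have hr' : (r : ℂ) ≠ 0 := mod_cast hr
  have h := (p.hasDerivAt (r : ℂ)⁻¹).comp (r : ℂ) (hasDerivAt_inv hr')
  exact h.comp_ofReal.congr_deriv (by simp [mul_comm])

end Polynomial

section LogLaplacian

open Polynomial Laplacian Module

/-- The polynomial in `1 / ⟨x⟩` to which `Δu / u` is equal when `u(x) = f(⟨x⟩)` on a space of
dimension `b` and the logarithmic derivative of `f` at `r` is `q(1 / r)`. -/
def logLaplacian {R : Type*} [CommRing R] (b : R) (q : R[X]) : R[X] :=
  (1 - X ^ 2) * (q ^ 2 - X ^ 2 * derivative q) + (C (b - 1) * X + X ^ 3) * q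

theorem laplacian_comp_japaneseBracket_of_logDeriv {E : Type*} [NormedAddCommGroup E]
    [InnerProductSpace ℝ E] [FiniteDimensional ℝ E] {f : ℝ → ℂ} {q : ℂ[X]}
    (hf : ∀ r : ℝ, 0 < r → HasDerivAt f (q.eval (r : ℂ)⁻¹ * f r) r) (x : E) :
    (Δ fun y : E => f (japaneseBracket y)) x =
      (logLaplacian (finrank ℝ E : ℂ) q).eval (japaneseBracket x : ℂ)⁻¹ *
        f (japaneseBracket x) := by
  have hf' : ∀ r : ℝ, 0 < r → HasDerivAt (fun s : ℝ => q.eval (s : ℂ)⁻¹ * f s) _ r := fun r hr =>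
    (hasDerivAt_eval_inv_ofReal q hr.ne').mul (hf r hr)
  rw [laplacian_comp_japaneseBracket hf hf']
  simp only [logLaplacian, Complex.real_smul, eval_add, eval_sub, eval_mul, eval_pow, eval_X,
    eval_C, eval_one]
  push_cast
  ring

theorem eval_one_logLaplacian {R : Type*} [CommRing R] (b : R) (q : R[X]) :
    (logLaplacian b q).eval 1 = b * q.eval 1 := by
  simp [logLaplacian]

theorem X_pow_dvd_logLaplacian_add_sub {R : Type*} [CommRing R] (b a : R) (q : R[X]) (m : ℕ) :
    X ^ (m + 2) ∣ logLaplacian b (q + C a * X ^ (m + 1)) -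
      (logLaplacian b q + C (2 * q.coeff 0 * a) * X ^ (m + 1)) := by
  refine ⟨C a * ((1 - X ^ 2) * (2 * q.divX + C a * X ^ m - C (m + 1 : R))
    - 2 * C (q.coeff 0) * X + C (b - 1) + X ^ 2), ?_⟩
  have hq : q = X * q.divX + C (q.coeff 0) := (X_mul_divX_add q).symm
  have hderiv : derivative (q + C a * X ^ (m + 1)) =
      derivative q + C a * C (m + 1 : R) * X ^ m := by simp [mul_assoc]
  rw [logLaplacian, logLaplacian, hderiv]
  generalize derivative q = q', q.divX = s, q.coeff 0 = c at *
  subst hq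
  simp only [C_mul, C_ofNat]
  ring

end LogLaplacian

section WKB

open Polynomial

variable {K : Type*} [Field K] (k b : K)

/-- The logarithmic derivative, as a polynomial in `1 / r`, of the WKB profile
`exp (-k r) r ^ (-(b - 1) / 2) exp (p (1 / r))`. -/
def wkbLogDeriv (p : K[X]) : K[X] :=
  -C k - C ((b - 1) / 2) * X - X ^ 2 * derivative p

theorem coeff_zero_wkbLogDeriv (p : K[X]) : (wkbLogDeriv k b p).coeff 0 = -k := by
  simp [wkbLogDeriv]

variable [CharZero K]

theorem exists_wkbLogDeriv_eq_add (p : K[X]) (a : K) (m : ℕ) :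
    ∃ p', wkbLogDeriv k b p' = wkbLogDeriv k b p + C a * X ^ (m + 2) := by
  refine ⟨p - C (a / (m + 1)) * X ^ (m + 1), ?_⟩
  have ha : C (a / (m + 1)) * C (m + 1 : K) = C a := by
    rw [← C_mul, div_mul_cancel₀ a m.cast_add_one_ne_zero]
  simp only [wkbLogDeriv, derivative_sub, derivative_C_mul, derivative_X_pow, ← ha]
  simp only [Nat.cast_add, Nat.cast_one, map_add, map_natCast, map_one, add_tsub_cancel_right]
  ring

variable {k}

theorem X_sq_dvd_logLaplacian_wkbLogDeriv_zero_sub :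
    X ^ 2 ∣ logLaplacian b (wkbLogDeriv k b 0) - C (k ^ 2) := by
  obtain ⟨α, rfl⟩ : ∃ α, b = 2 * α + 1 := ⟨(b - 1) / 2, by ring⟩
  refine ⟨C α * (1 - C α) - (C k + C α * X) ^ 2 - X * (C k + 2 * C α * X), ?_⟩
  simp only [logLaplacian, wkbLogDeriv, add_sub_cancel_right, mul_div_cancel_left₀ α two_ne_zero,
    derivative_zero, mul_zero, sub_zero, derivative_sub, derivative_neg, derivative_C_mul,
    derivative_C, derivative_X, C_mul, C_pow, C_ofNat]
  ring

theorem exists_X_pow_dvd_logLaplacian_wkbLogDeriv_sub (hk : k ≠ 0) (m : ℕ) :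
    ∃ p, X ^ (m + 2) ∣ logLaplacian b (wkbLogDeriv k b p) - C (k ^ 2) := by
  induction m with
  | zero => exact ⟨0, X_sq_dvd_logLaplacian_wkbLogDeriv_zero_sub b⟩
  | succ m ih =>
    obtain ⟨p, S, hS⟩ := ih
    obtain ⟨p', hp'⟩ := exists_wkbLogDeriv_eq_add k b p (S.coeff 0 / (2 * k)) m
    obtain ⟨T, hT⟩ := X_pow_dvd_logLaplacian_add_sub b (S.coeff 0 / (2 * k))
      (wkbLogDeriv k b p) (m + 1)
    have hcancel : 2 * (wkbLogDeriv k b p).coeff 0 * (S.coeff 0 / (2 * k)) = -S.coeff 0 := by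
      rw [coeff_zero_wkbLogDeriv]
      field_simp
    rw [← hp', hcancel, C_neg] at hT
    refine ⟨p', S.divX + T, ?_⟩
    linear_combination hT + hS - X ^ (m + 2) * X_mul_divX_add S

-- At `1 / r = 1`, that is at `x = 0`, the second condition makes the potential `-k ^ 2`, not zero.
theorem exists_X_pow_dvd_logLaplacian_wkbLogDeriv_sub_and_eval_one_eq_zero (hk : k ≠ 0) (m : ℕ) :
    ∃ p, X ^ (m + 2) ∣ logLaplacian b (wkbLogDeriv k b p) - C (k ^ 2) ∧
      (wkbLogDeriv k b p).eval 1 = 0 := by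
  obtain ⟨p, S, hS⟩ := exists_X_pow_dvd_logLaplacian_wkbLogDeriv_sub b hk m
  set q := wkbLogDeriv k b p
  obtain ⟨p', hp'⟩ := exists_wkbLogDeriv_eq_add k b p (-q.eval 1) m
  obtain ⟨T, hT⟩ := X_pow_dvd_logLaplacian_add_sub b (-q.eval 1) q (m + 1)
  rw [← hp'] at hT
  refine ⟨p', ⟨S + C (2 * q.coeff 0 * -q.eval 1) + X * T, ?_⟩, by simp [hp', q]⟩
  linear_combination hT + hS

end WKB

section Profile

open Polynomial

variable (k : ℂ) (n : ℕ) (p : ℂ[X])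

/-- The WKB profile: a truncated asymptotic expansion at infinity of the decaying radial solutions
of `Δu = k² u` on an `n`-dimensional space, exponentiated so that it has no zeros. -/
def wkbProfile (r : ℝ) : ℂ :=
  Complex.exp (-k * r - ((n - 1) / 2 * Real.log r : ℝ) + p.eval (r : ℂ)⁻¹)

theorem hasDerivAt_wkbProfile {r : ℝ} (hr : 0 < r) :
    HasDerivAt (wkbProfile k n p)
      ((wkbLogDeriv k n p).eval (r : ℂ)⁻¹ * wkbProfile k n p r) r := by
  have hlin : HasDerivAt (fun s : ℝ => -k * (s : ℂ)) (-k * 1) r :=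
    (hasDerivAt_id r).ofReal_comp.const_mul (-k)
  have hlog := ((Real.hasDerivAt_log hr.ne').const_mul ((n - 1 : ℝ) / 2)).ofReal_comp
  refine ((hlin.sub hlog).add (hasDerivAt_eval_inv_ofReal p hr.ne')).cexp.congr_deriv ?_
  simp only [wkbLogDeriv, wkbProfile, eval_sub, eval_neg, eval_mul, eval_pow, eval_C, eval_X,
    Pi.add_apply, Pi.sub_apply]
  push_cast
  ring

theorem exists_norm_wkbProfile_le (hn : 1 ≤ n) :
    ∃ M > 0, ∀ r ≥ 1, ‖wkbProfile k n p r‖ ≤ M * Real.exp (-(k.re * r)) := by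
  obtain ⟨M, hM⟩ := exists_norm_eval_le p
  refine ⟨Real.exp M, Real.exp_pos M, fun r hr => ?_⟩
  have hp : (p.eval (r : ℂ)⁻¹).re ≤ M :=
    (Complex.re_le_norm _).trans <|
      hM _ (by simpa using inv_le_one_of_one_le₀ (hr.trans (le_abs_self r)))
  have hn' : (1 : ℝ) ≤ n := mod_cast hn
  have hlog : 0 ≤ (n - 1) / 2 * Real.log r :=
    mul_nonneg (by linarith) (Real.log_nonneg hr)
  rw [wkbProfile, Complex.norm_exp, ← Real.exp_add, Real.exp_le_exp, Complex.add_re,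
    Complex.sub_re, Complex.ofReal_re, Complex.re_mul_ofReal, Complex.neg_re]
  linarith

open scoped ContDiff in
theorem contDiff_wkbProfile_comp_japaneseBracket {E : Type*} [NormedAddCommGroup E]
    [InnerProductSpace ℝ E] {m : ℕ∞ω} :
    ContDiff ℝ m fun x : E => wkbProfile k n p (japaneseBracket x) := by
  have hJ : ContDiff ℝ m fun x : E => (japaneseBracket x : ℂ) :=
    Complex.ofRealCLM.contDiff.comp contDiff_japaneseBracket
  have hlog : ContDiff ℝ m fun x : E => (n - 1) / 2 * Real.log (japaneseBracket x) :=
    contDiff_const.mul (contDiff_japaneseBracket.log fun x => (japaneseBracket_pos x).ne')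
  have hp : ContDiff ℝ m fun z : ℂ => p.eval z := by
    simpa only [coe_aeval_eq_eval] using (p.contDiff_aeval (𝕜 := ℂ) m).restrict_scalars ℝ
  have hinv : ContDiff ℝ m fun x : E => (japaneseBracket x : ℂ)⁻¹ :=
    hJ.inv fun x => mod_cast (japaneseBracket_pos x).ne'
  exact (((contDiff_const.mul hJ).sub (Complex.ofRealCLM.contDiff.comp hlog)).add
    (hp.comp hinv)).cexp

end Profile

theorem cpow_inv_two_re_pos {z : ℂ} (hz : z ∈ Complex.slitPlane) : 0 < (z ^ (2⁻¹ : ℂ)).re := by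
  rw [Complex.cpow_inv_two_re]
  have hnorm : 0 < ‖z‖ + z.re := by
    rcases hz with hre | him
    · positivity
    · linarith [neg_abs_le z.re, Complex.abs_re_lt_norm.2 him]
  positivity

theorem neg_mem_slitPlane_of_forall_ne {z : ℂ} (hz : ∀ t : ℝ, 0 ≤ t → z ≠ t) :
    -z ∈ Complex.slitPlane := by
  by_contra h
  simp only [Complex.mem_slitPlane_iff, Complex.neg_re, Complex.neg_im, not_or, not_lt, not_not,
    neg_nonpos, neg_eq_zero] at h
  exact hz z.re h.1 (Complex.ext rfl h.2)

section General

open Polynomial Laplacian Module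

theorem stmt10_general {E : Type*} [NormedAddCommGroup E] [InnerProductSpace ℝ E]
    [FiniteDimensional ℝ E] [Nontrivial E] {lam : ℂ} (hlam : ∀ t : ℝ, 0 ≤ t → lam ≠ t) (N : ℝ) :
    ∃ (C c : ℝ) (V u : E → ℂ), 0 < C ∧ 0 < c ∧ V ≠ 0 ∧ u ≠ 0 ∧ ContDiff ℝ 2 u ∧
      (∀ x, -Δ u x + V x * u x = lam * u x) ∧
      (∀ x, ‖V x‖ ≤ C * japaneseBracket x ^ (-N)) ∧
      ∀ x, ‖u x‖ ≤ C * Real.exp (-(c * ‖x‖)) := by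
  obtain ⟨k, hk, hkre⟩ : ∃ k : ℂ, k ^ 2 = -lam ∧ 0 < k.re :=
    ⟨_, Complex.cpow_nat_inv_pow _ two_ne_zero,
      cpow_inv_two_re_pos (neg_mem_slitPlane_of_forall_ne hlam)⟩
  have hk0 : k ≠ 0 := fun h => hkre.ne' (by simp [h])
  obtain ⟨m, hm⟩ := exists_nat_ge N
  obtain ⟨p, hdvd, hone⟩ :=
    exists_X_pow_dvd_logLaplacian_wkbLogDeriv_sub_and_eval_one_eq_zero (finrank ℝ E : ℂ) hk0 m
  set q := wkbLogDeriv k (finrank ℝ E : ℂ) p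
  obtain ⟨M₁, hV⟩ := exists_norm_eval_inv_le_of_X_pow_dvd hdvd
    (hm.trans (Nat.cast_le.2 (m.le_add_right 2)))
  obtain ⟨M₂, hM₂, hu⟩ := exists_norm_wkbProfile_le k _ p (finrank_pos (R := ℝ) (M := E))
  refine ⟨max M₁ M₂, k.re,
    fun x => (logLaplacian (finrank ℝ E : ℂ) q - C (k ^ 2)).eval (japaneseBracket x : ℂ)⁻¹,
    fun x => wkbProfile k (finrank ℝ E) p (japaneseBracket x), lt_max_of_lt_right hM₂, hkre,
    fun h => hk0 ?_, fun h => Complex.exp_ne_zero _ (congrFun h 0),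
    contDiff_wkbProfile_comp_japaneseBracket .., fun x => ?_, fun x => ?_, fun x => ?_⟩
  · simpa [japaneseBracket, eval_one_logLaplacian, hone] using congrFun h 0
  · dsimp only
    rw [laplacian_comp_japaneseBracket_of_logDeriv fun r => hasDerivAt_wkbProfile k _ p, eval_sub,
      eval_C, hk]
    ring
  · refine (hV _ (one_le_japaneseBracket x)).trans ?_
    have := japaneseBracket_pos x
    gcongr
    exact le_max_left _ _
  · refine (hu _ (one_le_japaneseBracket x)).trans ?_
    gcongr
    · exact le_max_right _ _
    · exact norm_le_japaneseBracket x

end General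

theorem stmt10 (d : ℕ) (hd : 2 ≤ d) (lam : ℂ) (hlam : ∀ t : ℝ, 0 ≤ t → lam ≠ (t : ℂ))
    (N P : ℝ) (hN : 0 ≤ N) (hP : 0 ≤ P)
    (hβ : max (2 - 2 * P) ((4 - 2 * N) / 3) < 1) :
    ∃ (C c : ℝ) (V : EuclideanSpace ℝ (Fin d) → ℂ)
      (W : EuclideanSpace ℝ (Fin d) → EuclideanSpace ℂ (Fin d))
      (u : EuclideanSpace ℝ (Fin d) → ℂ),
      0 < C ∧ 0 < c ∧
      ((V = 0 ∧ W ≠ 0) ∨ (V ≠ 0 ∧ W = 0)) ∧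
      u ≠ 0 ∧ ContDiff ℝ 2 u ∧
      (∀ x, -lap u x + (∑ i, W x i * pd u i x) + V x * u x = lam * u x) ∧
      (∀ x, ‖V x‖ ≤ C * Real.sqrt (1 + ‖x‖ ^ 2) ^ (-N)) ∧
      (∀ x, ‖W x‖ ≤ C * Real.sqrt (1 + ‖x‖ ^ 2) ^ (-P)) ∧
      (∃ A : ℝ, (A = -1 ∨ A = 0) ∧
        ∀ x : EuclideanSpace ℝ (Fin d), 2 ≤ ‖x‖ →
          ‖u x‖ ≤ C * Real.exp (-(c * ‖x‖ * Real.log ‖x‖ ^ A))) := by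
  have : Nonempty (Fin d) := ⟨⟨0, by lia⟩⟩
  obtain ⟨C, c, V, u, hC, hc, hV, hu, hsmooth, heq, hVN, hdecay⟩ :=
    stmt10_general (E := EuclideanSpace ℝ (Fin d)) hlam N
  exact ⟨C, c, V, 0, u, hC, hc, .inr ⟨hV, rfl⟩, hu, hsmooth,
    by simpa [lap_eq_laplacian hsmooth] using heq, hVN, fun x => by simpa using by positivity,
    0, .inr rfl, fun x _ => by simpa using hdecay x⟩
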